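/- Let d_1 ≥ … ≥ d_m be real numbers and let w_1,…,w_m be a basis of ℝ^m. For each positive integer t let H(t) be the unique symmetric positive semidefinite t-th root of the symmetric positive semidefinite matrix Σ_{i=1}^m e^{t d_i} w_i w_iᵀ. Then for each j ∈ {1,…,m}, the j-th largest eigenvalue of H(t) converges to e^{d_j} as t → ∞ (t ranging over the positive integers). -/

import Mathlib

open Matrix Filter Topology

/-- The `j`-th largest eigenvalue of a symmetric (Hermitian) real matrix, `j` being
zero-based, so `j = 0` gives the largest eigenvalue.  For non-Hermitian matrices the
value is junk (`0`). -/
noncomputable def nthLargestEig {m : ℕ} (A : Matrix (Fin m) (Fin m) ℝ) (j : Fin m) : ℝ :=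
  if hA : A.IsHermitian then hA.eigenvalues (Tuple.sort hA.eigenvalues j.rev) else 0

/-- Comparison of two weighted sums of squares of linear functionals representing the same quadratic
form: the weights at equal positions differ at most by the ratio of the frame bounds. -/
theorem mul_weight_le_mul_weight_of_sum_eq {m : ℕ} {a b : Fin m → ℝ}
    (ha : Antitone a) (hb : Antitone b) (ha0 : ∀ i, 0 ≤ a i) (hb0 : ∀ i, 0 ≤ b i)
    {v w : Fin m → EuclideanSpace ℝ (Fin m)}
    (hab : ∀ x, ∑ i, a i * (inner ℝ (v i) x) ^ 2 = ∑ i, b i * (inner ℝ (w i) x) ^ 2)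
    {c C : ℝ} (hc : ∀ x, c * ‖x‖ ^ 2 ≤ ∑ i, (inner ℝ (v i) x) ^ 2)
    (hC : ∀ x, ∑ i, (inner ℝ (w i) x) ^ 2 ≤ C * ‖x‖ ^ 2) (j : Fin m) :
    c * a j ≤ C * b j := by
  let u : Fin m → EuclideanSpace ℝ (Fin m) :=
    fun k => if k < j then w k else if j < k then v k else 0
  let L : EuclideanSpace ℝ (Fin m) →ₗ[ℝ] (Fin m → ℝ) :=
    LinearMap.pi fun k => (innerₛₗ ℝ (u k))
  have hL : ∀ x k, L x k = inner ℝ (u k) x := fun x k => rfl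
  have hsurj : ¬ Function.Surjective L := by
    intro h
    obtain ⟨x, hx⟩ := h 1
    have := congrFun hx j
    simp [hL, u] at this
  have hinj : ¬ Function.Injective L := by
    rwa [LinearMap.injective_iff_surjective_of_finrank_eq_finrank (by simp)]
  obtain ⟨x, hx, hx0⟩ : ∃ x, L x = 0 ∧ x ≠ 0 := by
    by_contra! h
    exact hinj ((injective_iff_map_eq_zero L).2 h)
  have hw0 : ∀ k, k < j → inner ℝ (w k) x = 0 := fun k hk => by
    simpa [hL, u, hk] using congrFun hx k
  have hv0 : ∀ k, j < k → inner ℝ (v k) x = 0 := fun k hk => by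
    simpa [hL, u, hk, hk.not_gt] using congrFun hx k
  have hlow : a j * ∑ i, (inner ℝ (v i) x) ^ 2 ≤ ∑ i, a i * (inner ℝ (v i) x) ^ 2 := by
    rw [Finset.mul_sum]
    refine Finset.sum_le_sum fun i _ => ?_
    rcases le_or_gt i j with h | h
    · exact mul_le_mul_of_nonneg_right (ha h) (sq_nonneg _)
    · simp [hv0 i h]
  have hupp : ∑ i, b i * (inner ℝ (w i) x) ^ 2 ≤ b j * ∑ i, (inner ℝ (w i) x) ^ 2 := by
    rw [Finset.mul_sum]
    refine Finset.sum_le_sum fun i _ => ?_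
    rcases le_or_gt j i with h | h
    · exact mul_le_mul_of_nonneg_right (hb h) (sq_nonneg _)
    · simp [hw0 i h]
  have hpos : 0 < ‖x‖ ^ 2 := by positivity
  refine le_of_mul_le_mul_right ?_ hpos
  calc c * a j * ‖x‖ ^ 2 = a j * (c * ‖x‖ ^ 2) := by ring
    _ ≤ a j * ∑ i, (inner ℝ (v i) x) ^ 2 := mul_le_mul_of_nonneg_left (hc x) (ha0 j)
    _ ≤ b j * ∑ i, (inner ℝ (w i) x) ^ 2 := hlow.trans ((hab x).trans_le hupp)
    _ ≤ b j * (C * ‖x‖ ^ 2) := mul_le_mul_of_nonneg_left (hC x) (hb0 j)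
    _ = C * b j * ‖x‖ ^ 2 := by ring

theorem sum_inner_sq_le_sum_norm_sq_mul {m : ℕ} (w : Fin m → EuclideanSpace ℝ (Fin m))
    (x : EuclideanSpace ℝ (Fin m)) :
    ∑ i, (inner ℝ (w i) x) ^ 2 ≤ (∑ i, ‖w i‖ ^ 2) * ‖x‖ ^ 2 := by
  rw [Finset.sum_mul]
  refine Finset.sum_le_sum fun i _ => ?_
  rw [← mul_pow, ← sq_abs]
  exact pow_le_pow_left₀ (abs_nonneg _) (abs_real_inner_le_norm _ _) 2

theorem exists_pos_mul_norm_sq_le_sum_inner_sq {m : ℕ} {w : Fin m → EuclideanSpace ℝ (Fin m)}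
    (hw : LinearIndependent ℝ w) :
    ∃ c : ℝ, 0 < c ∧ ∀ x, c * ‖x‖ ^ 2 ≤ ∑ i, (inner ℝ (w i) x) ^ 2 := by
  let L : EuclideanSpace ℝ (Fin m) →ₗ[ℝ] EuclideanSpace ℝ (Fin m) :=
    (WithLp.linearEquiv 2 ℝ (Fin m → ℝ)).symm.toLinearMap ∘ₗ
      LinearMap.pi fun k => (innerₛₗ ℝ (w k))
  have hL : ∀ x k, L x k = inner ℝ (w k) x := fun x k => rfl
  have hker : LinearMap.ker L = ⊥ := by
    rw [LinearMap.ker_eq_bot']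
    intro x hx
    have hspan : x ∈ Submodule.span ℝ (Set.range w) := by
      rw [hw.span_eq_top_of_card_eq_finrank' (by simp)]
      trivial
    have hperp : ∀ y ∈ Submodule.span ℝ (Set.range w), inner ℝ y x = 0 := by
      intro y hy
      induction hy using Submodule.span_induction with
      | mem y hy =>
        obtain ⟨k, rfl⟩ := hy
        rw [← hL, hx]
        rfl
      | zero => simp
      | add y z _ _ hy hz => rw [inner_add_left, hy, hz, add_zero]
      | smul r y _ hy => rw [real_inner_smul_left, hy, mul_zero]
    exact inner_self_eq_zero.1 (hperp x hspan)
  obtain ⟨K, hK, hanti⟩ := L.exists_antilipschitzWith hker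
  have hK' : (0 : ℝ) < K := hK
  refine ⟨((K : ℝ) ^ 2)⁻¹, by positivity, fun x => ?_⟩
  have hle : ‖x‖ ≤ K * ‖L x‖ := by simpa using hanti.le_mul_norm (map_zero L) x
  have hsq : ‖L x‖ ^ 2 = ∑ i, (inner ℝ (w i) x) ^ 2 := by
    simp [EuclideanSpace.norm_sq_eq, hL]
  rw [inv_mul_le_iff₀ (by positivity), ← hsq, ← mul_pow]
  exact pow_le_pow_left₀ (norm_nonneg _) hle 2

theorem Matrix.IsHermitian.inner_toEuclideanLin_pow_eq_sum {m : ℕ} {A : Matrix (Fin m) (Fin m) ℝ}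
    (hA : A.IsHermitian) (t : ℕ) (x : EuclideanSpace ℝ (Fin m)) :
    inner ℝ x (toEuclideanLin (A ^ t) x) =
      ∑ i, hA.eigenvalues i ^ t * (inner ℝ (hA.eigenvectorBasis i) x) ^ 2 := by
  have heig : ∀ i, toEuclideanLin (A ^ t) (hA.eigenvectorBasis i) =
      hA.eigenvalues i ^ t • hA.eigenvectorBasis i := by
    intro i
    apply WithLp.ofLp_injective
    rw [ofLp_toLpLin, toLin'_apply, WithLp.ofLp_smul]
    induction t with
    | zero => simp
    | succ t ih =>
      rw [pow_succ, ← mulVec_mulVec, hA.mulVec_eigenvectorBasis, mulVec_smul, ih, smul_smul,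
        pow_succ']
  have hsymm := isSymmetric_toEuclideanLin_iff.2 (hA.pow t)
  rw [← hA.eigenvectorBasis.sum_inner_mul_inner]
  refine Finset.sum_congr rfl fun i _ => ?_
  rw [← hsymm, heig, real_inner_smul_left, real_inner_comm]
  ring

theorem inner_toEuclideanLin_sum_smul_vecMulVec {m : ℕ} (b : Fin m → ℝ)
    (w : Fin m → EuclideanSpace ℝ (Fin m)) (x : EuclideanSpace ℝ (Fin m)) :
    inner ℝ x (toEuclideanLin (∑ i, b i • Matrix.vecMulVec (WithLp.equiv 2 (Fin m → ℝ) (w i))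
      (WithLp.equiv 2 (Fin m → ℝ) (w i))) x) = ∑ i, b i * (inner ℝ (w i) x) ^ 2 := by
  rw [map_sum, LinearMap.sum_apply, inner_sum]
  refine Finset.sum_congr rfl fun i _ => ?_
  have hrank : toEuclideanLin (Matrix.vecMulVec (WithLp.equiv 2 (Fin m → ℝ) (w i))
      (WithLp.equiv 2 (Fin m → ℝ) (w i))) x = (inner ℝ (w i) x) • w i := by
    ext k
    simp [vecMulVec_mulVec, EuclideanSpace.inner_eq_star_dotProduct, mul_comm]
    exact .inl (dotProduct_comm _ _)
  rw [map_smul, LinearMap.smul_apply, real_inner_smul_right, hrank, real_inner_smul_right,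
    real_inner_comm]
  ring

theorem tendsto_of_mul_pow_le_of_le_mul_pow {c C r : ℝ} (hc : 0 < c) (hC : 0 < C) (hr : 0 ≤ r)
    {u : ℕ → ℝ} (hu : ∀ t, 1 ≤ t → 0 ≤ u t ∧ c * r ^ t ≤ u t ^ t ∧ u t ^ t ≤ C * r ^ t) :
    Tendsto u atTop (𝓝 r) := by
  have hlim : ∀ a : ℝ, 0 < a →
      Tendsto (fun t : ℕ => a ^ ((t : ℝ)⁻¹) * r) atTop (𝓝 r) := by
    intro a ha
    have h := (Real.continuousAt_const_rpow (b := 0) ha.ne').tendsto.comp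
      (tendsto_inv_atTop_nhds_zero_nat (𝕜 := ℝ))
    simpa [Function.comp_def] using h.mul_const r
  have hroot : ∀ (a : ℝ) (t : ℕ), 0 < a → 1 ≤ t →
      (a ^ ((t : ℝ)⁻¹) * r) ^ t = a * r ^ t := by
    intro a t ha ht
    rw [mul_pow, Real.rpow_inv_natCast_pow ha.le (by lia)]
  refine tendsto_of_tendsto_of_tendsto_of_le_of_le' (hlim c hc) (hlim C hC) ?_ ?_
  · filter_upwards [eventually_ge_atTop 1] with t ht
    obtain ⟨h0, h1, -⟩ := hu t ht
    rw [← hroot c t hc ht] at h1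
    exact le_of_pow_le_pow_left₀ (by lia) h0 h1
  · filter_upwards [eventually_ge_atTop 1] with t ht
    obtain ⟨h0, -, h1⟩ := hu t ht
    rw [← hroot C t hC ht] at h1
    exact le_of_pow_le_pow_left₀ (by lia) (by positivity) h1

/-- Let `d 0 ≥ … ≥ d (m-1)` be real numbers and `w 0, …, w (m-1)` a basis of
`ℝ^m`.  For each positive integer `t`, let `H t` be the unique symmetric positive semidefinite
`t`-th root of `∑ i, exp (t * d i) • w i w iᵀ`.  Then for each `j`, the `j`-th largest
eigenvalue of `H t` converges to `exp (d j)` as `t → ∞`. -/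
theorem stmt0 {m : ℕ} (d : Fin m → ℝ) (hd : Antitone d)
    (w : Fin m → EuclideanSpace ℝ (Fin m)) (hw : LinearIndependent ℝ w)
    (H : ℕ → Matrix (Fin m) (Fin m) ℝ)
    (hH : ∀ t : ℕ, 1 ≤ t → (H t).PosSemidef ∧
      (H t) ^ t =
        ∑ i, Real.exp ((t : ℝ) * d i) •
          Matrix.vecMulVec (WithLp.equiv 2 (Fin m → ℝ) (w i)) (WithLp.equiv 2 (Fin m → ℝ) (w i)))
    (j : Fin m) :
    Tendsto (fun t : ℕ => nthLargestEig (H t) j) atTop (𝓝 (Real.exp (d j))) := by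
  obtain ⟨c, hc0, hc⟩ := exists_pos_mul_norm_sq_le_sum_inner_sq hw
  have hC := sum_inner_sq_le_sum_norm_sq_mul w
  have hC0 : 0 < ∑ i, ‖w i‖ ^ 2 :=
    Finset.sum_pos (fun i _ => by have := hw.ne_zero i; positivity) ⟨j, Finset.mem_univ j⟩
  refine tendsto_of_mul_pow_le_of_le_mul_pow hc0 hC0 (Real.exp_pos _).le fun t ht => ?_
  obtain ⟨hpsd, hpow⟩ := hH t ht
  have hA := hpsd.isHermitian
  let σ : Equiv.Perm (Fin m) := Fin.revPerm.trans (Tuple.sort hA.eigenvalues)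
  have hσ : Antitone fun i => hA.eigenvalues (σ i) := fun i k hik =>
    Tuple.monotone_sort hA.eigenvalues (Fin.rev_le_rev.2 hik)
  have hnonneg : ∀ i, 0 ≤ hA.eigenvalues (σ i) := fun i => hpsd.eigenvalues_nonneg _
  have heig : nthLargestEig (H t) j = hA.eigenvalues (σ j) := by
    rw [nthLargestEig, dif_pos hA]
    rfl
  have hform : ∀ x, ∑ i, hA.eigenvalues (σ i) ^ t *
      (inner ℝ (hA.eigenvectorBasis (σ i)) x) ^ 2 =
      ∑ i, Real.exp ((t : ℝ) * d i) * (inner ℝ (w i) x) ^ 2 := by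
    intro x
    rw [← inner_toEuclideanLin_sum_smul_vecMulVec (fun i => Real.exp ((t : ℝ) * d i)), ← hpow,
      hA.inner_toEuclideanLin_pow_eq_sum]
    exact Equiv.sum_comp σ
      fun i => hA.eigenvalues i ^ t * (inner ℝ (hA.eigenvectorBasis i) x) ^ 2
  have hparseval : ∀ x, ∑ i, (inner ℝ (hA.eigenvectorBasis (σ i)) x) ^ 2 = 1 * ‖x‖ ^ 2 := by
    intro x
    rw [Equiv.sum_comp σ fun i => (inner ℝ (hA.eigenvectorBasis i) x) ^ 2, one_mul,
      ← hA.eigenvectorBasis.sum_sq_norm_inner_right x]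
    simp
  have ha : Antitone fun i => hA.eigenvalues (σ i) ^ t := fun i k hik =>
    pow_le_pow_left₀ (hnonneg k) (hσ hik) t
  have hb : Antitone fun i => Real.exp ((t : ℝ) * d i) := fun i k hik =>
    Real.exp_le_exp.2 (mul_le_mul_of_nonneg_left (hd hik) t.cast_nonneg)
  have ha0 : ∀ i, 0 ≤ hA.eigenvalues (σ i) ^ t := fun i => pow_nonneg (hnonneg i) t
  have hb0 : ∀ i, 0 ≤ Real.exp ((t : ℝ) * d i) := fun i => (Real.exp_pos _).le
  rw [heig, ← Real.exp_nat_mul]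
  refine ⟨hnonneg j, ?_, ?_⟩
  · simpa using mul_weight_le_mul_weight_of_sum_eq hb ha hb0 ha0 (fun x => (hform x).symm) hc
      (fun x => (hparseval x).le) j
  · simpa using mul_weight_le_mul_weight_of_sum_eq ha hb ha0 hb0 hform
      (fun x => (hparseval x).ge) hC j
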